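/- Let 1/2 < s < 1 and C, R > 0. Let W be a (2s, C)-Frostman random variable with values in the ball B(0,R) ⊂ ℝ², and let W' be an independent copy of W. Then there exist a constant ε₀ = ε₀(s) > 0, an absolute constant A > 0, and a constant B_s > 0 depending only on s, such that for all n ∈ ℕ, Hₙ(|W − W'|²) ≥ n(s + ε₀) − A·log₊C − A·log₊R − B_s. -/

import Mathlib

open MeasureTheory ProbabilityTheory Real

/-- The dyadic discretization map `D_n(x) = 2^{-n} ⌊2^n x⌋`. -/
noncomputable def Dn (n : ℕ) (x : ℝ) : ℝ := (⌊(2 : ℝ) ^ n * x⌋ : ℝ) / (2 : ℝ) ^ n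

/-- Shannon entropy (base 2) of the discrete random variable `f` under `P`. -/
noncomputable def entOf {Ω : Type*} [MeasurableSpace Ω] {S : Type*}
    (P : Measure Ω) (f : Ω → S) : ℝ :=
  ∑' s : S, -((P (f ⁻¹' {s})).toReal * Real.logb 2 (P (f ⁻¹' {s})).toReal)

/-- `H_n(X)`: entropy of `D_n(X)`. -/
noncomputable def Hn {Ω : Type*} [MeasurableSpace Ω] (P : Measure Ω) (n : ℕ) (X : Ω → ℝ) : ℝ :=
  entOf P (fun ω => Dn n (X ω))

/-- `X` is `(s,C)`-Frostman: `P(X ∈ B(z,r)) ≤ C r^s` for every ball. -/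
def Frostman {Ω : Type*} [MeasurableSpace Ω] {E : Type*} [PseudoMetricSpace E]
    (P : Measure Ω) (X : Ω → E) (s C : ℝ) : Prop :=
  ∀ (z : E) (r : ℝ), 0 < r → (P (X ⁻¹' Metric.ball z r)).toReal ≤ C * r ^ s

/-- `log₊ x = max (log₂ x) 0`. -/
noncomputable def logPlus (x : ℝ) : ℝ := max (Real.logb 2 x) 0

/-!
Put `Z = W - W'`. The Frostman condition gives `P(|Z|² < r) ≤ C r^s`, which alone would only yield
entropy about `n s`. More is true of an interval `I` away from the origin, where `|Z|² ∈ I` confines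
`Z` to an annulus of radius `ρ` and relative width `a`, whose indicator is dominated by `1 / a`
times the arc length of the circle mollified at scale `ρ a`. By van der Corput, the Fourier
transform of the circle decays like `|ξ|^(-σ)` for `σ ≤ 1 / 2`. As `W'` is an independent copy of
`W`, the characteristic function of `Z` is nonnegative, so by Parseval the mass of the annulus is
controlled by the Riesz-type energy `∫ |ξ|^(-σ) exp (-t|ξ|²) E[exp (i⟨ξ, Z⟩)] dξ` with `t = (ρ a)²`.
The weight is a superposition of Gaussians, so the Frostman condition bounds this energy. For
`σ > 1 - s` the bound gains a factor `(k + 1)^(-κ)`, `κ = s + σ - 1`, in the probability that `|Z|²`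
lies in the dyadic cell `[k 2^(-n), (k + 1) 2^(-n))`. Its mean over the cells is a negative moment
of `|Z|²`, which gains `2^(-κ n)`, and Gibbs' inequality turns this mean into entropy `n (s + κ)`.
-/

open scoped RealInnerProductSpace

section VanDerCorput

variable {φ φ' φ'' : ℝ → ℝ} {a b l : ℝ}

/-- Since `cos φ = (sin φ / φ')' + sin φ * φ'' / φ' ^ 2`, and the last term is at most
`φ'' / φ' ^ 2 = -(1 / φ')'`, the function `(sin φ - 1) / φ'` has derivative at least `cos φ`. -/
lemma integral_cos_le_of_le_deriv (hab : a ≤ b) (hl : 0 < l)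
    (hφ : ∀ x ∈ Set.Icc a b, HasDerivAt φ (φ' x) x)
    (hφ' : ∀ x ∈ Set.Icc a b, HasDerivAt φ' (φ'' x) x)
    (hle : ∀ x ∈ Set.Icc a b, l ≤ φ' x) (hnonneg : ∀ x ∈ Set.Icc a b, 0 ≤ φ'' x) :
    ∫ x in a..b, cos (φ x) ≤ 2 / l := by
  have hpos : ∀ x ∈ Set.Icc a b, 0 < φ' x := fun x hx => hl.trans_le (hle x hx)
  have hderiv : ∀ x ∈ Set.Icc a b, HasDerivAt (fun y => (sin (φ y) - 1) / φ' y)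
      ((cos (φ x) * φ' x * φ' x - (sin (φ x) - 1) * φ'' x) / φ' x ^ 2) x := fun x hx =>
    ((hφ x hx).sin.sub_const 1).div (hφ' x hx) (hpos x hx).ne'
  have hcos_le : ∀ x ∈ Set.Icc a b, cos (φ x) ≤
      (cos (φ x) * φ' x * φ' x - (sin (φ x) - 1) * φ'' x) / φ' x ^ 2 := by
    intro x hx
    rw [le_div_iff₀ (pow_pos (hpos x hx) 2)]
    nlinarith [mul_nonneg (sub_nonneg.2 (sin_le_one (φ x))) (hnonneg x hx)]
  have hcont : ContinuousOn (fun x => cos (φ x)) (Set.Icc a b) := fun x hx =>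
    (hφ x hx).cos.continuousAt.continuousWithinAt
  have hint := intervalIntegral.integral_le_sub_of_hasDeriv_right_of_le hab
    (fun x hx => (hderiv x hx).continuousAt.continuousWithinAt)
    (fun x hx => (hderiv x (Set.Ioo_subset_Icc_self hx)).hasDerivWithinAt)
    hcont.integrableOn_Icc (fun x hx => hcos_le x (Set.Ioo_subset_Icc_self hx))
  have hright : (sin (φ b) - 1) / φ' b ≤ 0 :=
    div_nonpos_of_nonpos_of_nonneg (by linarith [sin_le_one (φ b)])
      (hpos b (Set.right_mem_Icc.2 hab)).le
  have hleft : (1 - sin (φ a)) / φ' a ≤ 2 / l :=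
    div_le_div₀ zero_le_two (by linarith [neg_one_le_sin (φ a)]) hl
      (hle a (Set.left_mem_Icc.2 hab))
  rw [← neg_sub (sin (φ a)) 1, neg_div] at hleft
  linarith

lemma abs_integral_cos_le_of_le_deriv (hab : a ≤ b) (hl : 0 < l)
    (hφ : ∀ x ∈ Set.Icc a b, HasDerivAt φ (φ' x) x)
    (hφ' : ∀ x ∈ Set.Icc a b, HasDerivAt φ' (φ'' x) x)
    (hle : ∀ x ∈ Set.Icc a b, l ≤ φ' x) (hnonneg : ∀ x ∈ Set.Icc a b, 0 ≤ φ'' x) :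
    |∫ x in a..b, cos (φ x)| ≤ 2 / l := by
  have hshift := integral_cos_le_of_le_deriv (φ := fun x => φ x + π) hab hl
    (fun x hx => (hφ x hx).add_const π) hφ' hle hnonneg
  simp only [cos_add_pi, intervalIntegral.integral_neg] at hshift
  exact abs_le'.2 ⟨integral_cos_le_of_le_deriv hab hl hφ hφ' hle hnonneg, hshift⟩

end VanDerCorput

/-- The Fourier transform `J(x)` of the arc length measure of the unit circle, at frequencies of
norm `x`; it is `2π` times the Bessel function `J₀`. -/
noncomputable def circleFourier (x : ℝ) : ℝ := ∫ θ in (0 : ℝ)..2 * π, cos (x * cos θ)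

lemma continuous_circleFourier : Continuous circleFourier := by
  unfold circleFourier
  exact intervalIntegral.continuous_parametric_intervalIntegral_of_continuous' (by fun_prop) _ _

lemma abs_circleFourier_le (x : ℝ) : |circleFourier x| ≤ 2 * π := by
  simpa [circleFourier, abs_of_pos pi_pos] using
    intervalIntegral.norm_integral_le_of_norm_le_const (a := 0) (b := 2 * π) (C := 1)
      (f := fun θ => cos (x * cos θ)) fun θ _ => abs_cos_le_one _

lemma circleFourier_eq_four_mul (x : ℝ) :
    circleFourier x = 4 * ∫ θ in (0 : ℝ)..π / 2, cos (x * cos θ) := by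
  have hint (a b : ℝ) : IntervalIntegrable (fun θ => cos (x * cos θ)) volume a b :=
    Continuous.intervalIntegrable (by fun_prop) a b
  have hhalf := intervalIntegral.integral_comp_sub_left (a := 0) (b := π / 2)
    (fun θ => cos (x * cos θ)) π
  have hfull := intervalIntegral.integral_comp_add_right (a := 0) (b := π)
    (fun θ => cos (x * cos θ)) π
  simp only [cos_pi_sub, cos_add_pi, mul_neg, cos_neg, sub_zero, sub_half, zero_add,
    ← two_mul] at hhalf hfull
  rw [circleFourier, ← intervalIntegral.integral_add_adjacent_intervals (hint 0 π) (hint π _),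
    ← hfull, ← intervalIntegral.integral_add_adjacent_intervals (hint 0 (π / 2)) (hint _ π),
    ← hhalf]
  ring

lemma abs_integral_cos_mul_cos_le {x a : ℝ} (hx : 0 < x) (ha : 0 < a) (haπ : a ≤ π / 2) :
    |∫ θ in (0 : ℝ)..π / 2, cos (x * cos θ)| ≤ a + π / (x * a) := by
  have hint (a b : ℝ) : IntervalIntegrable (fun θ => cos (x * cos θ)) volume a b :=
    Continuous.intervalIntegrable (by fun_prop) a b
  have hstationary : |∫ θ in (0 : ℝ)..a, cos (x * cos θ)| ≤ a := by
    simpa [abs_of_pos ha] using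
      intervalIntegral.norm_integral_le_of_norm_le_const (a := 0) (b := a) (C := 1)
        (f := fun θ => cos (x * cos θ)) fun θ _ => abs_cos_le_one _
  have hmonotone : |∫ θ in a..π / 2, cos (x * cos θ)| ≤ π / (x * a) := by
    have hvdc := abs_integral_cos_le_of_le_deriv (φ := fun θ => -(x * cos θ))
      (φ' := fun θ => x * sin θ) (φ'' := fun θ => x * cos θ) (l := x * (2 / π * a)) haπ
      (by positivity) (fun θ _ => by simpa using ((hasDerivAt_cos θ).const_mul x).fun_neg)
      (fun θ _ => (hasDerivAt_sin θ).const_mul x)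
      (fun θ hθ => mul_le_mul_of_nonneg_left
        ((mul_le_mul_of_nonneg_left hθ.1 (by positivity)).trans
          (mul_le_sin (ha.le.trans hθ.1) hθ.2)) hx.le)
      (fun θ hθ => mul_nonneg hx.le
        (cos_nonneg_of_neg_pi_div_two_le_of_le (by linarith [hθ.1, pi_pos]) hθ.2))
    simp only [cos_neg] at hvdc
    exact hvdc.trans_eq (by field_simp)
  rw [← intervalIntegral.integral_add_adjacent_intervals (hint 0 a) (hint a _)]
  exact (abs_add_le _ _).trans (add_le_add hstationary hmonotone)

lemma abs_circleFourier_le_rpow {σ x : ℝ} (hσ₀ : 0 ≤ σ) (hσ : σ ≤ 1 / 2) (hx : 0 < x) :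
    |circleFourier x| ≤ 20 * x ^ (-σ) := by
  rcases le_total x 1 with hx1 | hx1
  · have hone : 1 ≤ x ^ (-σ) := one_le_rpow_of_pos_of_le_one_of_nonpos hx hx1 (by linarith)
    linarith [abs_circleFourier_le x, pi_le_four]
  · set a := x ^ (-(1 / 2) : ℝ) with ha
    have ha0 : 0 < a := rpow_pos_of_pos hx _
    have ha1 : a ≤ 1 := rpow_le_one_of_one_le_of_nonpos hx1 (by norm_num)
    have haa : x * a * a = 1 := by
      rw [mul_assoc, ha, ← rpow_add hx, ← neg_add, add_halves, rpow_neg_one, mul_inv_cancel₀ hx.ne']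
    have hinv : π / (x * a) = π * a := by
      rw [div_eq_iff (by positivity), mul_assoc, mul_comm a, haa, mul_one]
    have haσ : a ≤ x ^ (-σ) := rpow_le_rpow_of_exponent_le hx1 (by linarith)
    have hint := abs_integral_cos_mul_cos_le hx ha0 (by linarith [pi_gt_three])
    rw [circleFourier_eq_four_mul, abs_mul, abs_of_pos four_pos]
    nlinarith [pi_le_four]

lemma lintegral_rpow_mul_exp_neg_mul_Ioi {b x : ℝ} (hb : 0 < b) (hx : 0 < x) :
    ∫⁻ v in Set.Ioi 0, ENNReal.ofReal (v ^ (b - 1)) * ENNReal.ofReal (exp (-(v * x))) =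
      ENNReal.ofReal (Gamma b) * ENNReal.ofReal (x ^ (-b)) := by
  have hint : IntegrableOn (fun v => v ^ (b - 1) * exp (-(x * v))) (Set.Ioi 0) := by
    refine Integrable.of_integral_ne_zero ?_
    rw [integral_rpow_mul_exp_neg_mul_Ioi hb hx]
    have := Gamma_pos_of_pos hb
    positivity
  rw [← ENNReal.ofReal_mul (Gamma_pos_of_pos hb).le, rpow_neg hx.le, ← inv_rpow hx.le, mul_comm,
    ← one_div, ← integral_rpow_mul_exp_neg_mul_Ioi hb hx, ofReal_integral_eq_lintegral_ofReal hint]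
  · refine setLIntegral_congr_fun measurableSet_Ioi fun v hv => ?_
    rw [mul_comm v x, ENNReal.ofReal_mul (rpow_nonneg (le_of_lt hv) _)]
  · filter_upwards [ae_restrict_mem measurableSet_Ioi] with v hv
    exact mul_nonneg (rpow_nonneg (le_of_lt hv) _) (exp_pos _).le

lemma lintegral_Ioi_mul_exp_neg_mul {v : ℝ} (hv : 0 < v) (x : ℝ) :
    ∫⁻ r in Set.Ioi x, ENNReal.ofReal (v * exp (-(v * r))) = ENNReal.ofReal (exp (-(v * x))) := by
  have hneg : -v < 0 := neg_neg_of_pos hv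
  simp_rw [← neg_mul]
  rw [← ofReal_integral_eq_lintegral_ofReal ((integrableOn_exp_mul_Ioi hneg x).const_mul v)
      (ae_of_all _ fun r => by positivity), integral_const_mul, integral_exp_mul_Ioi hneg,
    neg_div_neg_eq, mul_div_cancel₀ _ hv.ne']

section PiecewiseBound

variable {b p T A B : ℝ} {f : ℝ → ENNReal}

lemma setLIntegral_Ioc_rpow_mul_le (hb : 0 < b) (hT : 0 < T) (hA : 0 ≤ A)
    (hf : ∀ v ∈ Set.Ioc 0 T, f v ≤ ENNReal.ofReal A) :
    ∫⁻ v in Set.Ioc 0 T, ENNReal.ofReal (v ^ (b - 1)) * f v ≤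
      ENNReal.ofReal (A * (T ^ b / b)) := by
  have hint : IntegrableOn (fun v : ℝ => v ^ (b - 1)) (Set.Ioc 0 T) :=
    (intervalIntegrable_iff_integrableOn_Ioc_of_le hT.le).1
      (intervalIntegral.intervalIntegrable_rpow' (by linarith))
  have hval : ∫ v in Set.Ioc 0 T, v ^ (b - 1) = T ^ b / b := by
    rw [← intervalIntegral.integral_of_le hT.le, integral_rpow (Or.inl (by linarith)),
      sub_add_cancel, zero_rpow hb.ne', sub_zero]
  rw [← hval, ← integral_const_mul, ofReal_integral_eq_lintegral_ofReal (hint.const_mul A)]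
  · refine setLIntegral_mono' measurableSet_Ioc fun v hv => ?_
    rw [mul_comm, ENNReal.ofReal_mul hA]
    gcongr
    exact hf v hv
  · filter_upwards [ae_restrict_mem measurableSet_Ioc] with v hv
    exact mul_nonneg hA (rpow_nonneg hv.1.le _)

lemma setLIntegral_Ioi_rpow_mul_le (hbp : b < p) (hT : 0 < T) (hB : 0 ≤ B)
    (hf : ∀ v ∈ Set.Ioi T, f v ≤ ENNReal.ofReal (B * v ^ (-p))) :
    ∫⁻ v in Set.Ioi T, ENNReal.ofReal (v ^ (b - 1)) * f v ≤
      ENNReal.ofReal (B * (T ^ (b - p) / (p - b))) := by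
  have hint : IntegrableOn (fun v : ℝ => v ^ (b - p - 1)) (Set.Ioi T) :=
    integrableOn_Ioi_rpow_of_lt (by linarith) hT
  have hval : ∫ v in Set.Ioi T, v ^ (b - p - 1) = T ^ (b - p) / (p - b) := by
    rw [integral_Ioi_rpow_of_lt (by linarith) hT, sub_add_cancel, neg_div, ← div_neg, neg_sub]
  rw [← hval, ← integral_const_mul, ofReal_integral_eq_lintegral_ofReal (hint.const_mul B)]
  · refine setLIntegral_mono' measurableSet_Ioi fun v hv => ?_
    have hv0 : 0 < v := hT.trans hv
    calc ENNReal.ofReal (v ^ (b - 1)) * f v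
        ≤ ENNReal.ofReal (v ^ (b - 1)) * ENNReal.ofReal (B * v ^ (-p)) := by
          gcongr
          exact hf v hv
      _ = ENNReal.ofReal (B * v ^ (b - p - 1)) := by
          rw [← ENNReal.ofReal_mul (rpow_nonneg hv0.le _), mul_left_comm, ← rpow_add hv0]
          ring_nf
  · filter_upwards [ae_restrict_mem measurableSet_Ioi] with v hv
    exact mul_nonneg hB (rpow_nonneg (hT.trans hv).le _)

lemma lintegral_rpow_mul_le (hb : 0 < b) (hbp : b < p) (hT : 0 < T) (hA : 0 ≤ A) (hB : 0 ≤ B)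
    (hsmall : ∀ v ∈ Set.Ioc 0 T, f v ≤ ENNReal.ofReal A)
    (hlarge : ∀ v ∈ Set.Ioi T, f v ≤ ENNReal.ofReal (B * v ^ (-p))) :
    ∫⁻ v in Set.Ioi 0, ENNReal.ofReal (v ^ (b - 1)) * f v ≤
      ENNReal.ofReal (A * (T ^ b / b) + B * (T ^ (b - p) / (p - b))) := by
  have : 0 < p - b := sub_pos.2 hbp
  rw [← Set.Ioc_union_Ioi_eq_Ioi hT.le,
    lintegral_union measurableSet_Ioi (Set.Ioc_disjoint_Ioi le_rfl),
    ENNReal.ofReal_add (by positivity) (by positivity)]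
  exact add_le_add (setLIntegral_Ioc_rpow_mul_le hb hT hA hsmall)
    (setLIntegral_Ioi_rpow_mul_le hbp hT hB hlarge)

end PiecewiseBound

section LaplaceTransform

variable {α : Type*} [MeasurableSpace α] {μ : Measure α} {X : α → ℝ}

lemma lintegral_rpow_neg_eq_lintegral_laplace [SFinite μ] {b : ℝ} (hb : 0 < b)
    (hX : AEMeasurable X μ) (hpos : ∀ᵐ x ∂μ, 0 < X x) :
    ENNReal.ofReal (Gamma b) * ∫⁻ x, ENNReal.ofReal (X x ^ (-b)) ∂μ =
      ∫⁻ v in Set.Ioi 0, ENNReal.ofReal (v ^ (b - 1)) *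
        ∫⁻ x, ENNReal.ofReal (exp (-(v * X x))) ∂μ := by
  have hmeas : AEMeasurable (fun q : ℝ × α =>
      ENNReal.ofReal (q.1 ^ (b - 1)) * ENNReal.ofReal (exp (-(q.1 * X q.2))))
      ((volume.restrict (Set.Ioi 0)).prod μ) := by
    have := hX.comp_snd (μ := volume.restrict (Set.Ioi (0 : ℝ)))
    fun_prop
  simp_rw [← lintegral_const_mul' _ _ ENNReal.ofReal_ne_top]
  rw [lintegral_lintegral_swap hmeas]
  refine lintegral_congr_ae ?_
  filter_upwards [hpos] with x hx
  exact (lintegral_rpow_mul_exp_neg_mul_Ioi hb hx).symm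

lemma lintegral_rpow_neg_le_of_laplace_le [SFinite μ] {b p T A B : ℝ} (hb : 0 < b) (hbp : b < p)
    (hT : 0 < T) (hA : 0 ≤ A) (hB : 0 ≤ B) (hX : AEMeasurable X μ) (hpos : ∀ᵐ x ∂μ, 0 < X x)
    (hsmall : ∀ v ∈ Set.Ioc 0 T, ∫⁻ x, ENNReal.ofReal (exp (-(v * X x))) ∂μ ≤ ENNReal.ofReal A)
    (hlarge : ∀ v ∈ Set.Ioi T,
      ∫⁻ x, ENNReal.ofReal (exp (-(v * X x))) ∂μ ≤ ENNReal.ofReal (B * v ^ (-p))) :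
    ∫⁻ x, ENNReal.ofReal (X x ^ (-b)) ∂μ ≤
      ENNReal.ofReal ((A * (T ^ b / b) + B * (T ^ (b - p) / (p - b))) / Gamma b) := by
  have hΓ := Gamma_pos_of_pos hb
  rw [ENNReal.ofReal_div_of_pos hΓ, ENNReal.le_div_iff_mul_le (by simp [hΓ]) (by simp), mul_comm,
    lintegral_rpow_neg_eq_lintegral_laplace hb hX hpos]
  exact lintegral_rpow_mul_le hb hbp hT hA hB hsmall hlarge

lemma lintegral_exp_neg_mul_eq [SFinite μ] {v : ℝ} (hv : 0 < v) (hX : Measurable X)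
    (hX0 : ∀ x, 0 ≤ X x) :
    ∫⁻ x, ENNReal.ofReal (exp (-(v * X x))) ∂μ =
      ∫⁻ r in Set.Ioi 0, ENNReal.ofReal (v * exp (-(v * r))) * μ {x | X x < r} := by
  have htail (x : α) : ENNReal.ofReal (exp (-(v * X x))) =
      ∫⁻ r in Set.Ioi 0, {y | X y < r}.indicator
        (fun _ => ENNReal.ofReal (v * exp (-(v * r)))) x := by
    have hind : (fun r => {y | X y < r}.indicator
        (fun _ => ENNReal.ofReal (v * exp (-(v * r)))) x) =
        (Set.Ioi (X x)).indicator fun r => ENNReal.ofReal (v * exp (-(v * r))) := rfl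
    rw [hind, setLIntegral_indicator measurableSet_Ioi,
      Set.inter_eq_left.2 (Set.Ioi_subset_Ioi (hX0 x)), lintegral_Ioi_mul_exp_neg_mul hv]
  have hmeas : Measurable fun q : α × ℝ => {y | X y < q.2}.indicator
      (fun _ => ENNReal.ofReal (v * exp (-(v * q.2)))) q.1 :=
    Measurable.indicator (f := fun q : α × ℝ => ENNReal.ofReal (v * exp (-(v * q.2))))
      (by fun_prop) (measurableSet_lt (hX.comp measurable_fst) measurable_snd)
  simp_rw [htail]
  rw [lintegral_lintegral_swap hmeas.aemeasurable]
  refine lintegral_congr fun r => ?_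
  rw [lintegral_indicator_const (measurableSet_lt hX measurable_const)]

lemma lintegral_exp_neg_mul_le [IsFiniteMeasure μ] {s C v : ℝ} (hs : -1 < s)
    (hv : 0 < v) (hX : Measurable X) (hX0 : ∀ x, 0 ≤ X x)
    (hsmall : ∀ r, 0 < r → μ.real {x | X x < r} ≤ C * r ^ s) :
    ∫⁻ x, ENNReal.ofReal (exp (-(v * X x))) ∂μ ≤
      ENNReal.ofReal (C * Gamma (s + 1) * v ^ (-s)) := by
  have hC : 0 ≤ C := by simpa using measureReal_nonneg.trans (hsmall 1 one_pos)
  calc ∫⁻ x, ENNReal.ofReal (exp (-(v * X x))) ∂μ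
      = ∫⁻ r in Set.Ioi 0, ENNReal.ofReal (v * exp (-(v * r))) * μ {x | X x < r} :=
        lintegral_exp_neg_mul_eq hv hX hX0
    _ ≤ ∫⁻ r in Set.Ioi 0, ENNReal.ofReal (C * v) *
          (ENNReal.ofReal (r ^ (s + 1 - 1)) * ENNReal.ofReal (exp (-(r * v)))) := by
        refine setLIntegral_mono' measurableSet_Ioi fun r hr => ?_
        rw [← ofReal_measureReal, ← ENNReal.ofReal_mul (by positivity),
          ← ENNReal.ofReal_mul (rpow_nonneg (le_of_lt hr) _), ← ENNReal.ofReal_mul (by positivity)]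
        refine ENNReal.ofReal_le_ofReal ?_
        calc v * exp (-(v * r)) * μ.real {x | X x < r}
            ≤ v * exp (-(v * r)) * (C * r ^ s) := by
              gcongr
              exact hsmall r hr
          _ = C * v * (r ^ (s + 1 - 1) * exp (-(r * v))) := by ring_nf
    _ = ENNReal.ofReal (C * Gamma (s + 1) * v ^ (-s)) := by
        have hΓ := Gamma_pos_of_pos (neg_lt_iff_pos_add.1 hs)
        rw [lintegral_const_mul' _ _ ENNReal.ofReal_ne_top,
          lintegral_rpow_mul_exp_neg_mul_Ioi (neg_lt_iff_pos_add.1 hs) hv,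
          ← ENNReal.ofReal_mul hΓ.le, ← ENNReal.ofReal_mul (by positivity), neg_add, rpow_add hv,
          rpow_neg_one]
        congr 1
        field_simp

lemma lintegral_rpow_neg_le [IsProbabilityMeasure μ] {κ s C : ℝ} (hκ : 0 < κ) (hκs : κ < s)
    (hX : Measurable X) (hpos : ∀ x, 0 < X x)
    (hsmall : ∀ r, 0 < r → μ.real {x | X x < r} ≤ C * r ^ s) :
    ∫⁻ x, ENNReal.ofReal (X x ^ (-κ)) ∂μ ≤
      ENNReal.ofReal ((κ⁻¹ + C * Gamma (s + 1) * (s - κ)⁻¹) / Gamma κ) := by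
  have hC : 0 ≤ C := by simpa using measureReal_nonneg.trans (hsmall 1 one_pos)
  have hB : 0 ≤ C * Gamma (s + 1) := mul_nonneg hC (Gamma_pos_of_pos (by linarith)).le
  refine (lintegral_rpow_neg_le_of_laplace_le hκ hκs one_pos zero_le_one hB hX.aemeasurable
    (ae_of_all _ hpos) (fun v hv => ?_) fun v hv => ?_).trans_eq (by simp)
  · refine (lintegral_mono (g := fun _ => ENNReal.ofReal 1) fun x => ?_).trans_eq (by simp)
    exact ENNReal.ofReal_le_ofReal
      (exp_le_one_iff.2 (neg_nonpos.2 (mul_nonneg hv.1.le (hpos x).le)))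
  · exact lintegral_exp_neg_mul_le (by linarith) (one_pos.trans hv) hX (fun x => (hpos x).le) hsmall

end LaplaceTransform

section Fourier

variable {V : Type*} [NormedAddCommGroup V] [InnerProductSpace ℝ V] [MeasurableSpace V]
  [BorelSpace V]

lemma re_charFun (μ : Measure V) [IsFiniteMeasure μ] (ξ : V) :
    (charFun μ ξ).re = ∫ x, cos ⟪x, ξ⟫ ∂μ := by
  have hint : Integrable (fun x => Complex.exp (⟪x, ξ⟫ * Complex.I)) μ :=
    .of_bound (by fun_prop) 1 (ae_of_all _ fun x => (Complex.norm_exp_ofReal_mul_I _).le)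
  rw [charFun_apply]
  refine (integral_re hint).symm.trans ?_
  simp [Complex.exp_ofReal_mul_I_re]

variable [SecondCountableTopology V]

lemma integrable_mul_re_charFun {μ ν : Measure V} [IsProbabilityMeasure μ] {g : V → ℝ}
    (hg : Integrable g ν) : Integrable (fun ξ => g ξ * (charFun μ ξ).re) ν :=
  hg.mul_bdd (c := 1) (by fun_prop) <| ae_of_all _ fun ξ =>
    (Complex.abs_re_le_norm _).trans (norm_charFun_le_one ξ)

lemma integral_integral_mul_cos_inner (μ : Measure V) {ν : Measure V} [IsFiniteMeasure μ]
    [SFinite ν] {g : V → ℝ} (hg : Integrable g ν) :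
    ∫ x, ∫ ξ, g ξ * cos ⟪x, ξ⟫ ∂ν ∂μ = ∫ ξ, g ξ * (charFun μ ξ).re ∂ν := by
  have hint : Integrable (fun q : V × V => g q.2 * cos ⟪q.1, q.2⟫) (μ.prod ν) :=
    (hg.comp_snd μ).mul_bdd (c := 1) (by fun_prop) (ae_of_all _ fun q => abs_cos_le_one _)
  rw [integral_integral_swap hint]
  simp_rw [integral_const_mul, re_charFun]

end Fourier

section Gaussian

variable {V : Type*} [NormedAddCommGroup V] [InnerProductSpace ℝ V] [MeasurableSpace V]
  [BorelSpace V] [FiniteDimensional ℝ V] {t : ℝ}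

lemma integrable_exp_neg_mul_norm_sq (ht : 0 < t) :
    Integrable (fun ξ : V => exp (-(t * ‖ξ‖ ^ 2))) := by
  refine (GaussianFourier.integrable_cexp_neg_mul_sq_norm_add (V := V) (b := (t : ℂ))
    (by simpa using ht) 0 0).norm.congr (ae_of_all _ fun ξ => ?_)
  simp [Complex.norm_exp, ← Complex.ofReal_pow]

lemma integral_exp_neg_mul_norm_sq_mul_cos_inner (ht : 0 < t) (z : V) :
    ∫ ξ : V, exp (-(t * ‖ξ‖ ^ 2)) * cos ⟪z, ξ⟫ =
      (π / t) ^ (Module.finrank ℝ V / 2 : ℝ) * exp (-(‖z‖ ^ 2 / (4 * t))) := by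
  have hre (ξ : V) : exp (-(t * ‖ξ‖ ^ 2)) * cos ⟪z, ξ⟫ =
      RCLike.re (Complex.exp (-t * ‖ξ‖ ^ 2 + Complex.I * ⟪z, ξ⟫)) := by
    simp [Complex.exp_re, ← Complex.ofReal_pow]
  have ht' : 0 < (t : ℂ).re := by simpa using ht
  have hval : ((π : ℂ) / t) ^ (Module.finrank ℝ V / 2 : ℂ) *
      Complex.exp (Complex.I ^ 2 * ‖z‖ ^ 2 / (4 * t)) =
      (((π / t) ^ (Module.finrank ℝ V / 2 : ℝ) * exp (-(‖z‖ ^ 2 / (4 * t))) : ℝ) : ℂ) := by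
    rw [Complex.ofReal_mul, Complex.ofReal_cpow (by positivity)]
    push_cast
    rw [Complex.I_sq, neg_one_mul, neg_div]
  simp_rw [hre]
  rw [integral_re (GaussianFourier.integrable_cexp_neg_mul_sq_norm_add ht' Complex.I z),
    GaussianFourier.integral_cexp_neg_mul_sq_norm_add ht' Complex.I z, hval]
  exact Complex.ofReal_re _

lemma integral_exp_neg_mul_norm_sq_mul_re_charFun (μ : Measure V) [IsFiniteMeasure μ]
    (ht : 0 < t) :
    ∫ ξ, exp (-(t * ‖ξ‖ ^ 2)) * (charFun μ ξ).re =
      (π / t) ^ (Module.finrank ℝ V / 2 : ℝ) * ∫ x, exp (-(‖x‖ ^ 2 / (4 * t))) ∂μ := by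
  simp_rw [← integral_integral_mul_cos_inner μ (integrable_exp_neg_mul_norm_sq ht),
    integral_exp_neg_mul_norm_sq_mul_cos_inner ht, integral_const_mul]

lemma lintegral_exp_neg_mul_norm_sq_mul_re_charFun_le {μ : Measure V} [IsProbabilityMeasure μ]
    {s C : ℝ} (hs : -1 < s) (ht : 0 < t) (hpos : ∀ ξ, 0 ≤ (charFun μ ξ).re)
    (hsmall : ∀ r, 0 < r → μ.real {x | ‖x‖ ^ 2 < r} ≤ C * r ^ s) :
    ∫⁻ ξ, ENNReal.ofReal (exp (-(t * ‖ξ‖ ^ 2)) * (charFun μ ξ).re) ≤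
      ENNReal.ofReal (π ^ (Module.finrank ℝ V / 2 : ℝ) * 4 ^ s * Gamma (s + 1) * C *
        t ^ (-(Module.finrank ℝ V / 2 - s))) := by
  have hmoment := lintegral_exp_neg_mul_le (v := (4 * t)⁻¹) hs (by positivity)
    (by fun_prop) (fun x : V => sq_nonneg ‖x‖) hsmall
  rw [← ofReal_integral_eq_lintegral_ofReal
      (integrable_mul_re_charFun (integrable_exp_neg_mul_norm_sq ht))
      (ae_of_all _ fun ξ => mul_nonneg (exp_pos _).le (hpos ξ)),
    integral_exp_neg_mul_norm_sq_mul_re_charFun μ ht, ENNReal.ofReal_mul (by positivity),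
    ofReal_integral_eq_lintegral_ofReal
      (.of_bound (by fun_prop) 1 (ae_of_all _ fun x => ?_)) (ae_of_all _ fun x => by positivity)]
  · simp_rw [div_eq_inv_mul (_ ^ 2) (4 * t)]
    grw [hmoment]
    rw [← ENNReal.ofReal_mul (by positivity)]
    refine (congrArg _ ?_).le
    rw [div_rpow pi_pos.le ht.le, rpow_neg (by positivity), inv_rpow (by positivity), inv_inv,
      mul_rpow zero_le_four ht.le, neg_sub, rpow_sub ht]
    ring
  · rw [norm_of_nonneg (exp_pos _).le, exp_le_one_iff, neg_nonpos]
    positivity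

/-- Writing `‖ξ‖ ^ (-σ)` as a superposition of Gaussians reduces Riesz energies to Gaussian ones. -/
lemma lintegral_norm_rpow_neg_mul_le [Nontrivial V] {f : V → ℝ} {σ p B : ℝ} (hσ : 0 < σ)
    (hσp : σ / 2 < p) (ht : 0 < t) (hB : 0 ≤ B) (hf : Measurable f) (hf0 : ∀ ξ, 0 ≤ f ξ)
    (hgauss : ∀ v, 0 < v → ∫⁻ ξ, ENNReal.ofReal (exp (-(v * ‖ξ‖ ^ 2)) * f ξ) ≤
      ENNReal.ofReal (B * (t + v) ^ (-p))) :
    ∫⁻ ξ, ENNReal.ofReal (‖ξ‖ ^ (-σ) * f ξ) ≤ ENNReal.ofReal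
      (((σ / 2)⁻¹ + (p - σ / 2)⁻¹) / Gamma (σ / 2) * B * t ^ (σ / 2 - p)) := by
  set ν := volume.withDensity fun ξ => ENNReal.ofReal (f ξ) with hν
  have hdensity {g : V → ℝ} (hg : Measurable g) :
      ∫⁻ ξ, ENNReal.ofReal (g ξ) ∂ν = ∫⁻ ξ, ENNReal.ofReal (g ξ * f ξ) := by
    rw [hν, lintegral_withDensity_eq_lintegral_mul _ (by fun_prop) (by fun_prop)]
    simp_rw [Pi.mul_apply, ← ENNReal.ofReal_mul (hf0 _), mul_comm (f _)]
  have hlaplace {v B' : ℝ} (hv : 0 < v) (hle : B * (t + v) ^ (-p) ≤ B') :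
      ∫⁻ ξ, ENNReal.ofReal (exp (-(v * ‖ξ‖ ^ 2))) ∂ν ≤ ENNReal.ofReal B' :=
    (hdensity (by fun_prop)).trans_le
      ((hgauss v hv).trans (ENNReal.ofReal_le_ofReal hle))
  have hnonzero : ∀ᵐ ξ ∂ν, 0 < ‖ξ‖ ^ 2 := by
    refine (withDensity_absolutelyContinuous _ _).ae_le ?_
    filter_upwards [Measure.ae_ne volume (0 : V)] with ξ hξ
    positivity
  have hbound := lintegral_rpow_neg_le_of_laplace_le (A := B * t ^ (-p)) (half_pos hσ) hσp ht
    (by positivity) hB (by fun_prop) hnonzero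
    (fun v hv => hlaplace hv.1 (mul_le_mul_of_nonneg_left
      (rpow_le_rpow_of_nonpos ht (by linarith [hv.1]) (by linarith)) hB))
    (fun v hv => hlaplace (ht.trans hv) (mul_le_mul_of_nonneg_left
      (rpow_le_rpow_of_nonpos (ht.trans hv) (by linarith) (by linarith)) hB))
  have hnorm (ξ : V) : (‖ξ‖ ^ 2) ^ (-(σ / 2)) = ‖ξ‖ ^ (-σ) := by
    rw [← rpow_natCast, ← rpow_mul (norm_nonneg ξ), Nat.cast_two, mul_neg,
      mul_div_cancel₀ σ two_ne_zero]
  simp_rw [hnorm] at hbound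
  rw [← hdensity (by fun_prop)]
  refine hbound.trans_eq (congrArg _ ?_)
  rw [rpow_neg ht.le, rpow_sub ht]
  ring

variable (V) in
lemma exists_lintegral_norm_rpow_neg_mul_re_charFun_le [Nontrivial V] {s σ : ℝ} (hs : -1 < s)
    (hσ : 0 < σ) (hsσ : σ / 2 + s < Module.finrank ℝ V / 2) :
    ∃ D > 0, ∀ {μ : Measure V} [IsProbabilityMeasure μ] {C t : ℝ}, 0 < t →
      (∀ ξ, 0 ≤ (charFun μ ξ).re) → (∀ r, 0 < r → μ.real {x | ‖x‖ ^ 2 < r} ≤ C * r ^ s) →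
      ∫⁻ ξ, ENNReal.ofReal (‖ξ‖ ^ (-σ) * (exp (-(t * ‖ξ‖ ^ 2)) * (charFun μ ξ).re)) ≤
        ENNReal.ofReal (D * C * t ^ (σ / 2 + s - Module.finrank ℝ V / 2)) := by
  set p : ℝ := Module.finrank ℝ V / 2 - s with hp
  set B : ℝ := π ^ (Module.finrank ℝ V / 2 : ℝ) * 4 ^ s * Gamma (s + 1)
  have hσp : 0 < p - σ / 2 := by linarith
  have := Gamma_pos_of_pos (half_pos hσ)
  have := Gamma_pos_of_pos (neg_lt_iff_pos_add.1 hs)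
  refine ⟨((σ / 2)⁻¹ + (p - σ / 2)⁻¹) / Gamma (σ / 2) * B, by positivity,
    fun {μ} _ C t ht hpos hsmall => ?_⟩
  have hC : 0 ≤ C := by simpa using measureReal_nonneg.trans (hsmall 1 one_pos)
  refine (lintegral_norm_rpow_neg_mul_le (p := p) (B := B * C) hσ (by linarith) ht (by positivity)
    (by fun_prop) (fun ξ => mul_nonneg (exp_pos _).le (hpos ξ)) fun v hv => ?_).trans_eq ?_
  · simp_rw [← mul_assoc, ← exp_add, ← neg_add, ← add_mul, add_comm v]
    exact lintegral_exp_neg_mul_norm_sq_mul_re_charFun_le hs (by positivity) hpos hsmall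
  · rw [hp, mul_assoc _ B C]
    ring_nf

end Gaussian

section Circle

/-- The Euclidean plane. -/
abbrev Plane := EuclideanSpace ℝ (Fin 2)

/-- The point of the unit circle at angle `θ`. -/
noncomputable def circlePoint (θ : ℝ) : Plane := !₂[cos θ, sin θ]

@[fun_prop]
lemma continuous_circlePoint : Continuous circlePoint := by
  unfold circlePoint
  fun_prop

lemma periodic_circlePoint : Function.Periodic circlePoint (2 * π) := fun θ => by
  simp [circlePoint]

lemma inner_circlePoint (α β : ℝ) : ⟪circlePoint α, circlePoint β⟫ = cos (α - β) := by
  simp [circlePoint, PiLp.inner_apply, Fin.sum_univ_two, cos_sub, mul_comm]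

lemma norm_circlePoint (θ : ℝ) : ‖circlePoint θ‖ = 1 := by
  rw [norm_eq_sqrt_real_inner, inner_circlePoint, sub_self, cos_zero, sqrt_one]

lemma norm_circlePoint_sub_le (α β : ℝ) : ‖circlePoint α - circlePoint β‖ ≤ |α - β| := by
  refine abs_le_of_sq_le_sq' ?_ (abs_nonneg _) |>.2
  rw [norm_sub_sq_real, norm_circlePoint, norm_circlePoint, inner_circlePoint, sq_abs]
  linarith [one_sub_sq_div_two_le_cos (x := α - β)]

lemma exists_eq_norm_smul_circlePoint (z : Plane) : ∃ φ, z = ‖z‖ • circlePoint φ := by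
  set w : ℂ := ⟨z 0, z 1⟩ with hw
  have hnorm : ‖z‖ = ‖w‖ := by
    simp [EuclideanSpace.norm_eq, Complex.norm_def, Complex.normSq_apply, Fin.sum_univ_two, hw, sq]
  refine ⟨w.arg, ?_⟩
  ext i
  fin_cases i
  · simp [circlePoint, hnorm, Complex.norm_mul_cos_arg, hw]
  · simp [circlePoint, hnorm, Complex.norm_mul_sin_arg, hw]

lemma integral_sin_mul_cos (x : ℝ) : ∫ θ in (0 : ℝ)..2 * π, sin (x * cos θ) = 0 := by
  have hper : Function.Periodic (fun θ => sin (x * cos θ)) (2 * π) := fun θ => by simp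
  have hshift := intervalIntegral.integral_comp_add_right (a := 0) (b := 2 * π)
    (fun θ => sin (x * cos θ)) π
  simp only [cos_add_pi, mul_neg, sin_neg, intervalIntegral.integral_neg] at hshift
  rw [add_comm (2 * π), zero_add, hper.intervalIntegral_add_eq π 0, zero_add] at hshift
  linarith

lemma integral_cos_sub_mul_cos (c x : ℝ) :
    ∫ θ in (0 : ℝ)..2 * π, cos (c - x * cos θ) = circleFourier x * cos c := by
  simp_rw [cos_sub c]
  rw [intervalIntegral.integral_add (Continuous.intervalIntegrable (by fun_prop) _ _)
      (Continuous.intervalIntegrable (by fun_prop) _ _), intervalIntegral.integral_const_mul,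
    intervalIntegral.integral_const_mul, integral_sin_mul_cos, mul_zero, add_zero, mul_comm,
    circleFourier]

lemma integral_cos_inner_sub_smul_circlePoint (z ξ : Plane) (ρ : ℝ) :
    ∫ θ in (0 : ℝ)..2 * π, cos ⟪z - ρ • circlePoint θ, ξ⟫ =
      circleFourier (ρ * ‖ξ‖) * cos ⟪z, ξ⟫ := by
  obtain ⟨φ, hφ⟩ := exists_eq_norm_smul_circlePoint ξ
  have hinner (θ : ℝ) : ⟪z - ρ • circlePoint θ, ξ⟫ = ⟪z, ξ⟫ - ρ * ‖ξ‖ * cos (θ - φ) := by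
    rw [inner_sub_left, real_inner_smul_left, mul_assoc]
    nth_rw 2 [hφ]
    rw [real_inner_smul_right, inner_circlePoint]
  have hper : Function.Periodic (fun θ => cos (⟪z, ξ⟫ - ρ * ‖ξ‖ * cos θ)) (2 * π) := fun θ => by
    simp
  have hshift := hper.intervalIntegral_add_eq (0 - φ) 0
  rw [zero_add, sub_add_eq_add_sub, zero_add] at hshift
  simp_rw [hinner]
  rw [intervalIntegral.integral_comp_sub_right (fun θ => cos (⟪z, ξ⟫ - ρ * ‖ξ‖ * cos θ)) φ, hshift,
    integral_cos_sub_mul_cos]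

/-- The arc length of the circle of radius `ρ` about the origin, measured in angle and mollified at
scale `√t` by the Gaussian `exp (-‖z‖² / 4t)`. -/
noncomputable def circleMollified (ρ t : ℝ) (z : Plane) : ℝ :=
  ∫ θ in (0 : ℝ)..2 * π, exp (-(‖z - ρ • circlePoint θ‖ ^ 2 / (4 * t)))

lemma circleMollified_nonneg (ρ t : ℝ) (z : Plane) : 0 ≤ circleMollified ρ t z :=
  intervalIntegral.integral_nonneg two_pi_pos.le fun _ _ => (exp_pos _).le

lemma continuous_circleMollified (ρ t : ℝ) : Continuous (circleMollified ρ t) := by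
  unfold circleMollified
  exact intervalIntegral.continuous_parametric_intervalIntegral_of_continuous' (by fun_prop) _ _

lemma circleMollified_le {t : ℝ} (ht : 0 ≤ t) (ρ : ℝ) (z : Plane) :
    circleMollified ρ t z ≤ 2 * π := by
  refine (intervalIntegral.integral_mono_on (g := fun _ => 1) two_pi_pos.le
    (Continuous.intervalIntegrable (by fun_prop) _ _) (by simp) fun θ _ => ?_).trans_eq (by simp)
  exact exp_le_one_iff.2 (neg_nonpos.2 (by positivity))

lemma integrable_circleMollified (μ : Measure Plane) [IsFiniteMeasure μ] {t : ℝ} (ht : 0 ≤ t)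
    (ρ : ℝ) : Integrable (circleMollified ρ t) μ :=
  .of_bound (continuous_circleMollified ρ t).aestronglyMeasurable (2 * π) <| ae_of_all _ fun z =>
    (norm_of_nonneg (circleMollified_nonneg ρ t z)).trans_le (circleMollified_le ht ρ z)

lemma integrable_exp_neg_mul_norm_sq_mul_circleFourier {t : ℝ} (ht : 0 < t) (ρ : ℝ) :
    Integrable fun ξ : Plane => exp (-(t * ‖ξ‖ ^ 2)) * circleFourier (ρ * ‖ξ‖) :=
  (integrable_exp_neg_mul_norm_sq ht).mul_bdd (c := 2 * π)
    (continuous_circleFourier.comp (by fun_prop)).aestronglyMeasurable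
    (ae_of_all _ fun _ => abs_circleFourier_le _)

lemma circleMollified_eq_integral {t : ℝ} (ht : 0 < t) (ρ : ℝ) (z : Plane) :
    circleMollified ρ t z =
      t / π * ∫ ξ : Plane, exp (-(t * ‖ξ‖ ^ 2)) * circleFourier (ρ * ‖ξ‖) * cos ⟪z, ξ⟫ := by
  have hgauss (w : Plane) : exp (-(‖w‖ ^ 2 / (4 * t))) =
      t / π * ∫ ξ : Plane, exp (-(t * ‖ξ‖ ^ 2)) * cos ⟪w, ξ⟫ := by
    rw [integral_exp_neg_mul_norm_sq_mul_cos_inner ht, finrank_euclideanSpace_fin, Nat.cast_two,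
      div_self two_ne_zero, rpow_one]
    field_simp
  have hint : Integrable (fun q : ℝ × Plane =>
      exp (-(t * ‖q.2‖ ^ 2)) * cos ⟪z - ρ • circlePoint q.1, q.2⟫)
      ((volume.restrict (Set.Ioc 0 (2 * π))).prod volume) :=
    ((integrable_exp_neg_mul_norm_sq ht).comp_snd _).mul_bdd (c := 1) (by fun_prop)
      (ae_of_all _ fun _ => abs_cos_le_one _)
  simp_rw [circleMollified, hgauss]
  rw [intervalIntegral.integral_const_mul, intervalIntegral.integral_of_le two_pi_pos.le,
    integral_integral_swap hint]
  simp_rw [integral_const_mul, ← intervalIntegral.integral_of_le two_pi_pos.le,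
    integral_cos_inner_sub_smul_circlePoint, mul_assoc]

lemma norm_sub_smul_circlePoint_le {ρ r : ℝ} (hρ : 0 ≤ ρ) (φ θ : ℝ) :
    ‖r • circlePoint φ - ρ • circlePoint θ‖ ≤ |r - ρ| + ρ * |φ - θ| := by
  have hsplit : r • circlePoint φ - ρ • circlePoint θ =
      (r - ρ) • circlePoint φ + ρ • (circlePoint φ - circlePoint θ) := by module
  rw [hsplit]
  refine (norm_add_le _ _).trans ?_
  rw [norm_smul, norm_smul, norm_circlePoint, mul_one, norm_eq_abs, norm_of_nonneg hρ]
  gcongr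
  exact norm_circlePoint_sub_le φ θ

/-- A point of the annulus is within `2ρa` of an arc of angle `a`. -/
lemma mul_exp_neg_one_le_circleMollified {ρ a : ℝ} (hρ : 0 < ρ) (ha : 0 < a) (ha1 : a ≤ 1)
    {z : Plane} (hz : |‖z‖ - ρ| ≤ ρ * a) :
    a * exp (-1) ≤ circleMollified ρ ((ρ * a) ^ 2) z := by
  obtain ⟨φ, hφ⟩ := exists_eq_norm_smul_circlePoint z
  set f : ℝ → ℝ := fun θ => exp (-(‖z - ρ • circlePoint θ‖ ^ 2 / (4 * (ρ * a) ^ 2))) with hf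
  have hint (α β : ℝ) : IntervalIntegrable f volume α β :=
    Continuous.intervalIntegrable (by fun_prop) α β
  have hper : Function.Periodic f (2 * π) := fun θ => by simp [hf, periodic_circlePoint θ]
  have harc : ∀ θ ∈ Set.Icc φ (φ + a), exp (-1) ≤ f θ := by
    intro θ hθ
    have hdist : ‖z - ρ • circlePoint θ‖ ≤ 2 * (ρ * a) := by
      rw [hφ]
      refine (norm_sub_smul_circlePoint_le hρ.le φ θ).trans ?_
      have : |φ - θ| ≤ a := abs_le.2 ⟨by linarith [hθ.2], by linarith [hθ.1]⟩
      nlinarith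
    refine exp_le_exp.2 (neg_le_neg ((div_le_one (by positivity)).2 ?_))
    nlinarith [norm_nonneg (z - ρ • circlePoint θ)]
  calc a * exp (-1) = ∫ _ in φ..φ + a, exp (-1) := by simp
    _ ≤ ∫ θ in φ..φ + a, f θ :=
        intervalIntegral.integral_mono_on (by linarith) (by simp) (hint _ _) harc
    _ ≤ ∫ θ in φ..φ + 2 * π, f θ :=
        intervalIntegral.integral_mono_interval le_rfl (by linarith) (by linarith [pi_gt_three])
          (ae_of_all _ fun _ => (exp_pos _).le) (hint _ _)
    _ = circleMollified ρ ((ρ * a) ^ 2) z := by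
        rw [hper.intervalIntegral_add_eq φ 0, zero_add, circleMollified]

end Circle

section Annulus

lemma integral_circleMollified (μ : Measure Plane) [IsFiniteMeasure μ] {t : ℝ} (ht : 0 < t)
    (ρ : ℝ) :
    ∫ z, circleMollified ρ t z ∂μ =
      t / π * ∫ ξ, exp (-(t * ‖ξ‖ ^ 2)) * circleFourier (ρ * ‖ξ‖) * (charFun μ ξ).re := by
  simp_rw [circleMollified_eq_integral ht, integral_const_mul]
  rw [integral_integral_mul_cos_inner μ (integrable_exp_neg_mul_norm_sq_mul_circleFourier ht ρ)]

variable {s σ : ℝ}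

lemma abs_exp_neg_mul_norm_sq_mul_circleFourier_le {ρ : ℝ} (hσ₀ : 0 ≤ σ) (hσ : σ ≤ 1 / 2)
    (hρ : 0 < ρ) (t : ℝ) {ξ : Plane} (hξ : ξ ≠ 0) :
    |exp (-(t * ‖ξ‖ ^ 2)) * circleFourier (ρ * ‖ξ‖)| ≤
      20 * ρ ^ (-σ) * (‖ξ‖ ^ (-σ) * exp (-(t * ‖ξ‖ ^ 2))) := by
  have hJ := abs_circleFourier_le_rpow hσ₀ hσ (mul_pos hρ (norm_pos_iff.2 hξ))
  rw [mul_rpow hρ.le (norm_nonneg ξ)] at hJ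
  rw [abs_mul, abs_of_pos (exp_pos _)]
  exact (mul_le_mul_of_nonneg_left hJ (exp_pos _).le).trans_eq (by ring)

lemma exists_integral_circleMollified_le (hs : -1 < s) (hσ₀ : 0 < σ) (hσ : σ ≤ 1 / 2)
    (hsσ : σ / 2 + s < 1) :
    ∃ D > 0, ∀ {μ : Measure Plane} [IsProbabilityMeasure μ] {C ρ t : ℝ}, 0 < ρ → 0 < t →
      (∀ ξ, 0 ≤ (charFun μ ξ).re) → (∀ r, 0 < r → μ.real {z | ‖z‖ ^ 2 < r} ≤ C * r ^ s) →
      ∫ z, circleMollified ρ t z ∂μ ≤ D * C * ρ ^ (-σ) * t ^ (σ / 2 + s) := by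
  obtain ⟨D, hD, henergy⟩ := exists_lintegral_norm_rpow_neg_mul_re_charFun_le Plane hs hσ₀
    (by simpa using hsσ)
  refine ⟨20 / π * D, by positivity, fun {μ} _ C ρ t hρ ht hpos hsmall => ?_⟩
  have hC : 0 ≤ C := by simpa using measureReal_nonneg.trans (hsmall 1 one_pos)
  have hnorm : ∀ᵐ ξ : Plane,
      ENNReal.ofReal ‖exp (-(t * ‖ξ‖ ^ 2)) * circleFourier (ρ * ‖ξ‖) * (charFun μ ξ).re‖ ≤
        ENNReal.ofReal (20 * ρ ^ (-σ)) *
          ENNReal.ofReal (‖ξ‖ ^ (-σ) * (exp (-(t * ‖ξ‖ ^ 2)) * (charFun μ ξ).re)) := by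
    filter_upwards [Measure.ae_ne volume (0 : Plane)] with ξ hξ
    rw [← ENNReal.ofReal_mul (by positivity), norm_mul, norm_of_nonneg (hpos ξ), ← mul_assoc,
      ← mul_assoc]
    refine ENNReal.ofReal_le_ofReal (mul_le_mul_of_nonneg_right ?_ (hpos ξ))
    rw [mul_assoc]
    exact abs_exp_neg_mul_norm_sq_mul_circleFourier_le hσ₀.le hσ hρ t hξ
  have hle : ∫ ξ, exp (-(t * ‖ξ‖ ^ 2)) * circleFourier (ρ * ‖ξ‖) * (charFun μ ξ).re ≤
      20 * ρ ^ (-σ) * (D * C * t ^ (σ / 2 + s - 1)) := by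
    have hexp : σ / 2 + s - 1 = σ / 2 + s - Module.finrank ℝ Plane / 2 := by simp
    refine (le_norm_self _).trans ((norm_integral_le_lintegral_norm _).trans
      (ENNReal.toReal_le_of_le_ofReal ?_ ?_))
    · positivity
    · grw [lintegral_mono_ae hnorm, lintegral_const_mul' _ _ ENNReal.ofReal_ne_top,
        henergy ht hpos hsmall]
      rw [← ENNReal.ofReal_mul (by positivity), hexp]
  rw [integral_circleMollified μ ht]
  grw [hle]
  rw [rpow_sub_one ht.ne']
  refine le_of_eq ?_
  field_simp

lemma exists_measureReal_annulus_le (hs : -1 < s) (hσ₀ : 0 < σ) (hσ : σ ≤ 1 / 2)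
    (hsσ : σ / 2 + s < 1) :
    ∃ D > 0, ∀ {μ : Measure Plane} [IsProbabilityMeasure μ] {C ρ a : ℝ}, 0 < ρ → 0 < a → a ≤ 1 →
      (∀ ξ, 0 ≤ (charFun μ ξ).re) → (∀ r, 0 < r → μ.real {z | ‖z‖ ^ 2 < r} ≤ C * r ^ s) →
      μ.real {z | |‖z‖ - ρ| ≤ ρ * a} ≤ D * C * ρ ^ (2 * s) * a ^ (2 * s + σ - 1) := by
  obtain ⟨D, hD, hmollified⟩ := exists_integral_circleMollified_le hs hσ₀ hσ hsσ
  refine ⟨exp 1 * D, by positivity, fun {μ} _ C ρ a hρ ha ha1 hpos hsmall => ?_⟩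
  have hmarkov := mul_meas_ge_le_integral_of_nonneg (μ := μ)
    (ae_of_all _ (circleMollified_nonneg ρ ((ρ * a) ^ 2)))
    (integrable_circleMollified μ (by positivity) ρ) (a * exp (-1))
  have hsubset : μ.real {z | |‖z‖ - ρ| ≤ ρ * a} ≤
      μ.real {z | a * exp (-1) ≤ circleMollified ρ ((ρ * a) ^ 2) z} :=
    measureReal_mono fun z hz => mul_exp_neg_one_le_circleMollified hρ ha ha1 hz
  have hpow : ρ ^ (-σ) * ((ρ * a) ^ 2) ^ (σ / 2 + s) =
      ρ ^ (2 * s) * (a * a ^ (2 * s + σ - 1)) := by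
    rw [rpow_sub_one ha.ne', mul_div_cancel₀ _ ha.ne', ← rpow_natCast, ← rpow_mul (by positivity),
      mul_rpow hρ.le ha.le, Nat.cast_two, ← mul_assoc, ← rpow_add hρ]
    ring_nf
  have hle := (mul_le_mul_of_nonneg_left hsubset (by positivity)).trans
    (hmarkov.trans (hmollified hρ (by positivity) hpos hsmall))
  rw [mul_assoc (D * C), hpow] at hle
  refine le_of_mul_le_mul_left (hle.trans_eq ?_) (mul_pos ha (exp_pos (-1)))
  rw [exp_neg]
  field_simp

end Annulus

section Floor

variable {s σ : ℝ}

lemma abs_norm_sub_sqrt_le_of_floor_eq {E : Type*} [SeminormedAddGroup E] {N : ℝ} (hN : 0 < N)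
    {i : ℕ} (hi : i ≠ 0) {z : E} (hz : ⌊N * ‖z‖ ^ 2⌋₊ = i) :
    |‖z‖ - √(i / N)| ≤ √(i / N) * (i : ℝ)⁻¹ := by
  obtain ⟨hlow, hupp⟩ := (Nat.floor_eq_iff' hi).1 hz
  have : (0 : ℝ) < i := Nat.cast_pos.2 (Nat.pos_of_ne_zero hi)
  have : 0 < √(i / N) := sqrt_pos.2 (by positivity)
  have hle : √(i / N) ≤ ‖z‖ := sqrt_le_left (norm_nonneg z) |>.2 ((div_le_iff₀' hN).2 hlow)
  have hge : ‖z‖ ≤ √(i / N) * (1 + (i : ℝ)⁻¹) := by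
    refine (pow_le_pow_iff_left₀ (norm_nonneg z) (by positivity) two_ne_zero).1 ?_
    calc ‖z‖ ^ 2 ≤ (i + 1) / N := (le_div_iff₀' hN).2 hupp.le
      _ = i / N * (1 + (i : ℝ)⁻¹) := by field_simp
      _ ≤ i / N * (1 + (i : ℝ)⁻¹) ^ 2 := by
          gcongr
          exact le_self_pow₀ (le_add_of_nonneg_right (by positivity)) two_ne_zero
      _ = (√(i / N) * (1 + (i : ℝ)⁻¹)) ^ 2 := by rw [mul_pow, sq_sqrt (by positivity)]
  rw [abs_of_nonneg (sub_nonneg.2 hle)]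
  linarith

lemma rpow_neg_le_two_rpow_mul_rpow_neg {x κ : ℝ} (hx : 1 ≤ x) (hκ : 0 ≤ κ) :
    x ^ (-κ) ≤ 2 ^ κ * (x + 1) ^ (-κ) := by
  have hx0 : 0 < x := one_pos.trans_le hx
  rw [rpow_neg hx0.le, rpow_neg (by positivity), ← div_eq_mul_inv,
    ← div_rpow zero_le_two (by positivity), ← inv_rpow hx0.le]
  refine rpow_le_rpow (by positivity) ?_ hκ
  rw [inv_le_comm₀ hx0 (by positivity), inv_div]
  linarith

lemma sqrt_div_rpow_mul_inv_rpow {x N : ℝ} (hx : 0 < x) (hN : 0 < N) (s t : ℝ) :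
    √(x / N) ^ (2 * s) * x⁻¹ ^ t = N ^ (-s) * x ^ (s - t) := by
  rw [sqrt_eq_rpow, ← rpow_mul (by positivity), one_div, inv_mul_cancel_left₀ two_ne_zero,
    div_rpow hx.le hN.le, inv_rpow hx.le, rpow_neg hN.le, rpow_sub hx]
  ring

lemma exists_measureReal_floor_eq_le (hs : -1 < s) (hσ₀ : 0 < σ) (hσ : σ ≤ 1 / 2)
    (hsσ : σ / 2 + s < 1) (hκ : 0 ≤ s + σ - 1) :
    ∃ D > 0, ∀ {μ : Measure Plane} [IsProbabilityMeasure μ] {C N : ℝ}, 0 < N →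
      (∀ ξ, 0 ≤ (charFun μ ξ).re) → (∀ r, 0 < r → μ.real {z | ‖z‖ ^ 2 < r} ≤ C * r ^ s) →
      ∀ i : ℕ, μ.real {z | ⌊N * ‖z‖ ^ 2⌋₊ = i} ≤
        D * C * N ^ (-s) * ((i : ℝ) + 1) ^ (-(s + σ - 1)) := by
  obtain ⟨D, hD, hannulus⟩ := exists_measureReal_annulus_le hs hσ₀ hσ hsσ
  refine ⟨max 1 (D * 2 ^ (s + σ - 1)), by positivity, fun {μ} _ C N hN hpos hsmall i => ?_⟩
  have hC : 0 ≤ C := by simpa using measureReal_nonneg.trans (hsmall 1 one_pos)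
  rcases eq_or_ne i 0 with rfl | hi
  · calc μ.real {z | ⌊N * ‖z‖ ^ 2⌋₊ = 0} = μ.real {z | ‖z‖ ^ 2 < N⁻¹} := by
          simp_rw [Nat.floor_eq_zero, ← one_div, lt_div_iff₀' hN]
      _ ≤ C * N⁻¹ ^ s := hsmall _ (inv_pos.2 hN)
      _ ≤ max 1 (D * 2 ^ (s + σ - 1)) * (C * N⁻¹ ^ s) :=
          le_mul_of_one_le_left (by positivity) (le_max_left _ _)
      _ = _ := by simp [rpow_neg hN.le, inv_rpow hN.le, mul_assoc]
  · have hi0 : (0 : ℝ) < i := Nat.cast_pos.2 (Nat.pos_of_ne_zero hi)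
    have hi1 : (1 : ℝ) ≤ i := Nat.one_le_cast.2 (Nat.pos_of_ne_zero hi)
    calc μ.real {z | ⌊N * ‖z‖ ^ 2⌋₊ = i}
        ≤ μ.real {z | |‖z‖ - √(i / N)| ≤ √(i / N) * (i : ℝ)⁻¹} :=
          measureReal_mono fun z hz => abs_norm_sub_sqrt_le_of_floor_eq hN hi hz
      _ ≤ D * C * √(i / N) ^ (2 * s) * (i : ℝ)⁻¹ ^ (2 * s + σ - 1) :=
          hannulus (sqrt_pos.2 (by positivity)) (by positivity) (inv_le_one_of_one_le₀ hi1) hpos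
            hsmall
      _ = D * C * N ^ (-s) * (i : ℝ) ^ (-(s + σ - 1)) := by
          rw [mul_assoc, sqrt_div_rpow_mul_inv_rpow hi0 hN]
          ring_nf
      _ ≤ D * C * N ^ (-s) * (2 ^ (s + σ - 1) * ((i : ℝ) + 1) ^ (-(s + σ - 1))) := by
          gcongr
          exact rpow_neg_le_two_rpow_mul_rpow_neg hi1 hκ
      _ = D * 2 ^ (s + σ - 1) * C * N ^ (-s) * ((i : ℝ) + 1) ^ (-(s + σ - 1)) := by ring
      _ ≤ _ := by
          gcongr
          exact le_max_right _ _

lemma exists_lintegral_rpow_neg_floor_add_one_le {κ : ℝ} (hκ : 0 < κ) (hκs : κ < s) :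
    ∃ K > 0, ∀ {α : Type*} [MeasurableSpace α] {μ : Measure α} [IsProbabilityMeasure μ] {X : α → ℝ}
      {C N : ℝ}, 1 ≤ C → 0 < N → Measurable X → (∀ r, 0 < r → μ.real {x | X x < r} ≤ C * r ^ s) →
      ∫⁻ x, ENNReal.ofReal (((⌊N * X x⌋₊ : ℝ) + 1) ^ (-κ)) ∂μ ≤
        ENNReal.ofReal (K * C * N ^ (-κ)) := by
  have : 0 < Gamma κ := Gamma_pos_of_pos hκ
  have : 0 < Gamma (s + 1) := Gamma_pos_of_pos (by linarith)
  have : 0 < (s - κ)⁻¹ := inv_pos.2 (sub_pos.2 hκs)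
  refine ⟨(κ⁻¹ + Gamma (s + 1) * (s - κ)⁻¹) / Gamma κ, by positivity,
    fun {α} _ μ _ X C N hC hN hX hsmall => ?_⟩
  have hscale (x : α) : ENNReal.ofReal (((⌊N * X x⌋₊ : ℝ) + 1) ^ (-κ)) =
      ENNReal.ofReal (N ^ (-κ)) * ENNReal.ofReal ((((⌊N * X x⌋₊ : ℝ) + 1) / N) ^ (-κ)) := by
    rw [← ENNReal.ofReal_mul (by positivity), ← mul_rpow hN.le (by positivity),
      mul_div_cancel₀ _ hN.ne']
  have hlt (x : α) : X x < ((⌊N * X x⌋₊ : ℝ) + 1) / N :=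
    (lt_div_iff₀' hN).2 (Nat.lt_floor_add_one _)
  have henergy := lintegral_rpow_neg_le (X := fun x => ((⌊N * X x⌋₊ : ℝ) + 1) / N) hκ hκs
    (by fun_prop) (fun x => by positivity) fun r hr =>
      (measureReal_mono fun x hx => (hlt x).trans hx).trans (hsmall r hr)
  simp_rw [hscale]
  rw [lintegral_const_mul' _ _ ENNReal.ofReal_ne_top]
  grw [henergy]
  rw [← ENNReal.ofReal_mul (by positivity)]
  refine ENNReal.ofReal_le_ofReal ?_
  calc N ^ (-κ) * ((κ⁻¹ + C * Gamma (s + 1) * (s - κ)⁻¹) / Gamma κ)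
      ≤ N ^ (-κ) * ((C * κ⁻¹ + C * Gamma (s + 1) * (s - κ)⁻¹) / Gamma κ) := by
        gcongr
        exact le_mul_of_one_le_left (by positivity) hC
    _ = (κ⁻¹ + Gamma (s + 1) * (s - κ)⁻¹) / Gamma κ * C * N ^ (-κ) := by ring

end Floor

section Entropy

variable {Ω S T : Type*} {f : Ω → S}

lemma preimage_comp_singleton {φ : S → T} (hφ : φ.Injective) (s : S) :
    φ ∘ f ⁻¹' {φ s} = f ⁻¹' {s} := by
  rw [Set.preimage_comp, ← Set.image_singleton, hφ.preimage_image]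

lemma preimage_comp_singleton_of_notMem_range {φ : S → T} {t : T} (ht : t ∉ Set.range φ) :
    φ ∘ f ⁻¹' {t} = ∅ := by
  rw [Set.preimage_comp, Set.preimage_singleton_eq_empty.2 ht, Set.preimage_empty]

variable [MeasurableSpace Ω] {P : Measure Ω}

/-- The entropy series defining `entOf P f` converges. Without this `entOf P f` is the junk value
`0` instead of `∞`. -/
def HasFiniteEntropy (P : Measure Ω) (f : Ω → S) : Prop :=
  Summable fun s => -((P (f ⁻¹' {s})).toReal * logb 2 (P (f ⁻¹' {s})).toReal)

lemma hasFiniteEntropy_comp_iff {φ : S → T} (hφ : φ.Injective) :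
    HasFiniteEntropy P (φ ∘ f) ↔ HasFiniteEntropy P f := by
  rw [HasFiniteEntropy, HasFiniteEntropy, ← hφ.summable_iff fun t ht => by
    simp [preimage_comp_singleton_of_notMem_range ht]]
  exact summable_congr fun s => by rw [Function.comp_apply, preimage_comp_singleton hφ]

lemma entOf_comp {φ : S → T} (hφ : φ.Injective) : entOf P (φ ∘ f) = entOf P f := by
  rw [entOf, ← hφ.tsum_eq fun t ht => by
    contrapose! ht
    simp [preimage_comp_singleton_of_notMem_range ht]]
  simp only [preimage_comp_singleton hφ, entOf]

lemma hasFiniteEntropy_of_ae_mem_finset {F : Finset S} (hF : ∀ᵐ ω ∂P, f ω ∈ F) :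
    HasFiniteEntropy P f := by
  refine summable_of_ne_finset_zero (s := F) fun s hs => ?_
  have : P (f ⁻¹' {s}) = 0 := measure_mono_null (fun ω hω hmem => hs (hω ▸ hmem)) hF
  simp [this]

section Map

variable [MeasurableSpace S] [MeasurableSpace T] [MeasurableSingletonClass T] {g : S → T}

lemma hasFiniteEntropy_map_iff (hf : AEMeasurable f P) (hg : Measurable g) :
    HasFiniteEntropy (P.map f) g ↔ HasFiniteEntropy P (g ∘ f) := by
  simp only [HasFiniteEntropy, Measure.map_apply_of_aemeasurable hf (hg (.singleton _)),
    Set.preimage_comp]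

lemma entOf_map (hf : AEMeasurable f P) (hg : Measurable g) :
    entOf (P.map f) g = entOf P (g ∘ f) := by
  simp only [entOf, Measure.map_apply_of_aemeasurable hf (hg (.singleton _)), Set.preimage_comp]

end Map

lemma mul_sub_le_neg_mul_logb {p q Q : ℝ} (hp : 0 ≤ p) (hpq : p ≤ q) (hQ : 0 < Q) :
    p * (-logb 2 Q + (log 2)⁻¹) - p * q * (Q * log 2)⁻¹ ≤ -(p * logb 2 p) := by
  rcases hp.eq_or_lt with rfl | hp
  · simp
  have hlog : log p ≤ log Q + (q / Q - 1) :=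
    calc log p ≤ log q := log_le_log hp hpq
      _ = log Q + log (q / Q) := by rw [log_div (hp.trans_le hpq).ne' hQ.ne']; ring
      _ ≤ log Q + (q / Q - 1) := by grw [log_le_sub_one_of_pos (div_pos (hp.trans_le hpq) hQ)]
  have : 0 < log 2 := log_pos one_lt_two
  calc p * (-logb 2 Q + (log 2)⁻¹) - p * q * (Q * log 2)⁻¹
      = -(p * ((log Q + (q / Q - 1)) / log 2)) := by rw [logb]; field_simp; ring
    _ ≤ -(p * logb 2 p) := by rw [logb]; gcongr

section Countable

variable [Countable S] [MeasurableSpace S] [MeasurableSingletonClass S]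

lemma hasSum_measureReal_preimage_singleton [IsProbabilityMeasure P] (hf : Measurable f) :
    HasSum (fun s => P.real (f ⁻¹' {s})) 1 := by
  have htsum : ∑' s, P (f ⁻¹' {s}) = 1 := by
    rw [← measure_univ (μ := P), ← Set.preimage_univ (f := f), ← Set.iUnion_of_singleton S,
      Set.preimage_iUnion, measure_iUnion]
    · exact fun s t hst => (Set.disjoint_singleton.2 hst).preimage f
    · exact fun s => hf (.singleton s)
  have hsum := ENNReal.hasSum_toReal (f := fun s => P (f ⁻¹' {s})) (by simp [htsum])
  rwa [← ENNReal.tsum_toReal_eq fun s => measure_ne_top P _, htsum, ENNReal.toReal_one] at hsum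

lemma exists_hasSum_measureReal_mul_le [IsFiniteMeasure P] (hf : Measurable f) {q : S → ℝ} {Q : ℝ}
    (hQ : 0 ≤ Q) (hq : ∀ s, 0 ≤ q s)
    (hint : ∫⁻ ω, ENNReal.ofReal (q (f ω)) ∂P ≤ ENNReal.ofReal Q) :
    ∃ M ≤ Q, HasSum (fun s => P.real (f ⁻¹' {s}) * q s) M := by
  have htsum : ∑' s, ENNReal.ofReal (P.real (f ⁻¹' {s}) * q s) ≤ ENNReal.ofReal Q :=
    calc ∑' s, ENNReal.ofReal (P.real (f ⁻¹' {s}) * q s)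
        = ∫⁻ s, ENNReal.ofReal (q s) ∂P.map f := by
          rw [lintegral_countable']
          refine tsum_congr fun s => ?_
          rw [Measure.map_apply hf (.singleton s), ENNReal.ofReal_mul measureReal_nonneg,
            ofReal_measureReal, mul_comm]
      _ ≤ ENNReal.ofReal Q := by rwa [lintegral_map .of_discrete hf]
  have hsum := ENNReal.hasSum_toReal (htsum.trans_lt ENNReal.ofReal_lt_top).ne
  rw [← ENNReal.tsum_toReal_eq fun s => ENNReal.ofReal_ne_top] at hsum
  simp only [ENNReal.toReal_ofReal (mul_nonneg measureReal_nonneg (hq _))] at hsum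
  exact ⟨_, ENNReal.toReal_le_of_le_ofReal hQ htsum, hsum⟩

lemma neg_logb_le_entOf [IsProbabilityMeasure P] (hf : Measurable f) {q : S → ℝ} {Q : ℝ}
    (hQ : 0 < Q) (hfin : HasFiniteEntropy P f) (hq : ∀ s, P.real (f ⁻¹' {s}) ≤ q s)
    (hint : ∫⁻ ω, ENNReal.ofReal (q (f ω)) ∂P ≤ ENNReal.ofReal Q) :
    -logb 2 Q ≤ entOf P f := by
  obtain ⟨M, hMQ, hM⟩ := exists_hasSum_measureReal_mul_le hf hQ.le
    (fun s => measureReal_nonneg.trans (hq s)) hint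
  have : 0 < log 2 := log_pos one_lt_two
  calc -logb 2 Q = 1 * (-logb 2 Q + (log 2)⁻¹) - Q * (Q * log 2)⁻¹ := by field_simp; ring
    _ ≤ 1 * (-logb 2 Q + (log 2)⁻¹) - M * (Q * log 2)⁻¹ := by gcongr
    _ ≤ entOf P f := hasSum_le (fun s => mul_sub_le_neg_mul_logb measureReal_nonneg (hq s) hQ)
        (((hasSum_measureReal_preimage_singleton hf).mul_right _).sub (hM.mul_right _))
        hfin.hasSum

end Countable

end Entropy

lemma Dn_eq_natFloor_div {n : ℕ} {x : ℝ} (hx : 0 ≤ x) :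
    Dn n x = (⌊2 ^ n * x⌋₊ : ℝ) / 2 ^ n := by
  rw [Dn, natCast_floor_eq_intCast_floor (by positivity)]

lemma finite_image_Dn_Icc (n : ℕ) (a b : ℝ) : (Dn n '' Set.Icc a b).Finite := by
  refine ((Set.finite_Icc ⌊2 ^ n * a⌋ ⌊2 ^ n * b⌋).image fun k : ℤ => (k : ℝ) / 2 ^ n).subset ?_
  rintro _ ⟨x, ⟨hax, hxb⟩, rfl⟩
  exact ⟨⌊2 ^ n * x⌋, ⟨Int.floor_mono (by gcongr), Int.floor_mono (by gcongr)⟩, rfl⟩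

lemma hasFiniteEntropy_Dn_of_ae_mem_Icc {Ω : Type*} [MeasurableSpace Ω] {P : Measure Ω} {X : Ω → ℝ}
    {n : ℕ} {a b : ℝ} (hX : ∀ᵐ ω ∂P, X ω ∈ Set.Icc a b) :
    HasFiniteEntropy P fun ω => Dn n (X ω) := by
  refine hasFiniteEntropy_of_ae_mem_finset (F := (finite_image_Dn_Icc n a b).toFinset) ?_
  filter_upwards [hX] with ω hω
  exact (Set.Finite.mem_toFinset _).2 ⟨X ω, hω, rfl⟩

lemma logb_mul_sq_mul_two_pow_rpow {L C : ℝ} (hL : 0 < L) (hC : 0 < C) (n : ℕ) (t : ℝ) :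
    logb 2 (L * C ^ 2 * (2 ^ n) ^ (-t)) = logb 2 L + 2 * logb 2 C - n * t := by
  rw [logb_mul (by positivity) (by positivity), logb_mul hL.ne' (by positivity), logb_pow,
    logb_rpow_eq_mul_logb_of_pos (by positivity), logb_pow, logb_self_eq_one one_lt_two]
  push_cast
  ring

lemma exists_le_entOf_floor {s : ℝ} (hs : 1 / 2 < s) (hs₁ : s < 1) :
    ∃ ε₀ > 0, ∃ B > 0, ∀ {μ : Measure Plane} [IsProbabilityMeasure μ] {C : ℝ}, 1 ≤ C →
      (∀ ξ, 0 ≤ (charFun μ ξ).re) → (∀ r, 0 < r → μ.real {z | ‖z‖ ^ 2 < r} ≤ C * r ^ s) →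
      ∀ n : ℕ, HasFiniteEntropy μ (fun z => ⌊2 ^ n * ‖z‖ ^ 2⌋₊) →
        n * (s + ε₀) - 2 * logb 2 C - B ≤ entOf μ fun z => ⌊2 ^ n * ‖z‖ ^ 2⌋₊ := by
  obtain ⟨σ, hσs, hσ⟩ := exists_between (show 1 - s < min (1 / 2) (2 - 2 * s) from
    lt_min (by linarith) (by linarith))
  obtain ⟨hσ₁, hσ₂⟩ := lt_min_iff.1 hσ
  obtain ⟨D, hD, hbin⟩ := exists_measureReal_floor_eq_le (s := s) (σ := σ) (by linarith)
    (by linarith) hσ₁.le (by linarith) (by linarith)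
  set κ := s + σ - 1
  obtain ⟨K, hK, hmoment⟩ := exists_lintegral_rpow_neg_floor_add_one_le (s := s) (κ := κ)
    (by linarith) (by linarith)
  refine ⟨κ, by linarith, max 1 (logb 2 (D * K)), by positivity,
    fun {μ} _ C hC hpos hsmall n hfin => ?_⟩
  have hint : ∫⁻ z, ENNReal.ofReal
        (D * C * (2 ^ n) ^ (-s) * ((⌊2 ^ n * ‖z‖ ^ 2⌋₊ : ℝ) + 1) ^ (-κ)) ∂μ ≤
      ENNReal.ofReal (D * K * C ^ 2 * (2 ^ n) ^ (-(s + κ))) := by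
    simp_rw [ENNReal.ofReal_mul (show 0 ≤ D * C * (2 ^ n) ^ (-s) by positivity)]
    rw [lintegral_const_mul' _ _ ENNReal.ofReal_ne_top]
    grw [hmoment hC (by positivity) (by fun_prop) hsmall]
    rw [← ENNReal.ofReal_mul (by positivity), neg_add, rpow_add (by positivity)]
    exact ENNReal.ofReal_le_ofReal (by linarith)
  calc n * (s + κ) - 2 * logb 2 C - max 1 (logb 2 (D * K))
      ≤ n * (s + κ) - 2 * logb 2 C - logb 2 (D * K) := by grw [← le_max_right]
    _ = -logb 2 (D * K * C ^ 2 * (2 ^ n) ^ (-(s + κ))) := by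
        rw [logb_mul_sq_mul_two_pow_rpow (by positivity) (by positivity)]
        ring
    _ ≤ entOf μ fun z => ⌊2 ^ n * ‖z‖ ^ 2⌋₊ :=
        neg_logb_le_entOf (by fun_prop) (by positivity) hfin
          (hbin (by positivity) hpos hsmall) hint

namespace Frostman

variable {Ω E : Type*} [MeasurableSpace Ω] {P : Measure Ω} {s C : ℝ}

lemma mono [PseudoMetricSpace E] {X : Ω → E} {C' : ℝ} (h : Frostman P X s C) (hC : C ≤ C') :
    Frostman P X s C' :=
  fun z r hr => (h z r hr).trans (by gcongr)

lemma sub_of_indepFun [SeminormedAddCommGroup E] [MeasurableSpace E] [BorelSpace E]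
    [SecondCountableTopology E] [IsProbabilityMeasure P] {X Y : Ω → E} (h : Frostman P X s C)
    (hX : AEMeasurable X P) (hY : AEMeasurable Y P) (hXY : IndepFun X Y P) :
    Frostman P (fun ω => X ω - Y ω) s C := by
  intro z r hr
  have hS : MeasurableSet ((fun q : E × E => q.1 - q.2) ⁻¹' Metric.ball z r) :=
    (measurable_fst.sub measurable_snd) measurableSet_ball
  have := Measure.isProbabilityMeasure_map hX
  have := Measure.isProbabilityMeasure_map hY
  have hslice (y : E) : (fun x => (x, y)) ⁻¹' ((fun q : E × E => q.1 - q.2) ⁻¹' Metric.ball z r) =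
      Metric.ball (z + y) r := by
    ext x
    simp [dist_eq_norm, sub_sub, add_comm]
  refine ENNReal.toReal_le_of_le_ofReal (ENNReal.toReal_nonneg.trans (h z r hr)) ?_
  calc P ((fun ω => X ω - Y ω) ⁻¹' Metric.ball z r)
      = ∫⁻ y, P.map X (Metric.ball (z + y) r) ∂P.map Y := by
        simp_rw [← hslice]
        rw [← Measure.prod_apply_symm hS,
          ← (indepFun_iff_map_prod_eq_prod_map_map hX hY).1 hXY,
          Measure.map_apply_of_aemeasurable (hX.prodMk hY) hS]
        rfl
    _ ≤ ∫⁻ _, ENNReal.ofReal (C * r ^ s) ∂P.map Y := by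
        refine lintegral_mono fun y => ?_
        rw [Measure.map_apply_of_aemeasurable hX measurableSet_ball]
        exact ENNReal.le_ofReal_iff_toReal_le (measure_ne_top _ _)
          (ENNReal.toReal_nonneg.trans (h z r hr)) |>.2 (h _ r hr)
    _ = ENNReal.ofReal (C * r ^ s) := by simp

lemma map_measureReal_norm_sq_lt_le [SeminormedAddCommGroup E] [MeasurableSpace E]
    [OpensMeasurableSpace E] {Z : Ω → E} (h : Frostman P Z (2 * s) C) (hZ : AEMeasurable Z P)
    {r : ℝ} (hr : 0 < r) : (P.map Z).real {z | ‖z‖ ^ 2 < r} ≤ C * r ^ s := by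
  have hball : {z : E | ‖z‖ ^ 2 < r} = Metric.ball 0 √r := by
    ext z
    rw [mem_ball_zero_iff, lt_sqrt (norm_nonneg z)]
    rfl
  rw [hball, measureReal_def, Measure.map_apply_of_aemeasurable hZ measurableSet_ball]
  refine (h 0 _ (sqrt_pos.2 hr)).trans_eq ?_
  rw [sqrt_eq_rpow, ← rpow_mul hr.le]
  ring_nf

end Frostman

lemma re_charFun_map_sub_nonneg {Ω E : Type*} [MeasurableSpace Ω] {P : Measure Ω}
    [IsProbabilityMeasure P] [NormedAddCommGroup E] [InnerProductSpace ℝ E] [MeasurableSpace E]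
    [BorelSpace E] [SecondCountableTopology E] {X Y : Ω → E} (hXY : IndepFun X Y P)
    (hident : IdentDistrib X Y P P) (ξ : E) :
    0 ≤ (charFun (P.map fun ω => X ω - Y ω) ξ).re := by
  have hneg : charFun (P.map (-Y)) ξ = starRingEnd ℂ (charFun (P.map Y) ξ) := by
    rw [← charFun_neg, show -Y = fun ω => (-1 : ℝ) • Y ω by ext; simp,
      charFun_map_smul_comp hident.aemeasurable_snd, neg_one_smul]
  have hsub : (fun ω => X ω - Y ω) = X + -Y := by
    ext ω
    simp [sub_eq_add_neg]
  have := Measure.isProbabilityMeasure_map hident.aemeasurable_snd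
  rw [hsub, hXY.neg_right.charFun_map_add_eq_mul hident.aemeasurable_fst
    hident.aemeasurable_snd.neg, Pi.mul_apply, hneg, hident.map_eq, Complex.mul_conj,
    Complex.ofReal_re]
  exact Complex.normSq_nonneg _

lemma ae_dist_sq_mem_Icc {Ω E : Type*} [MeasurableSpace Ω] {P : Measure Ω} [PseudoMetricSpace E]
    [MeasurableSpace E] [OpensMeasurableSpace E] {X Y : Ω → E} {z : E} {R : ℝ}
    (hident : IdentDistrib X Y P P) (hX : ∀ᵐ ω ∂P, X ω ∈ Metric.ball z R) :
    ∀ᵐ ω ∂P, dist (X ω) (Y ω) ^ 2 ∈ Set.Icc 0 ((2 * R) ^ 2) := by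
  filter_upwards [hX, hident.ae_mem_snd measurableSet_ball hX] with ω hXω hYω
  have hdist := dist_triangle_right (X ω) (Y ω) z
  exact ⟨sq_nonneg _, pow_le_pow_left₀ dist_nonneg
    (by linarith [Metric.mem_ball.1 hXω, Metric.mem_ball.1 hYω]) 2⟩

lemma Dn_comp_eq {Ω : Type*} {n : ℕ} {X : Ω → ℝ} (hX : ∀ ω, 0 ≤ X ω) :
    (fun ω => Dn n (X ω)) = (fun k : ℕ => (k : ℝ) / 2 ^ n) ∘ fun ω => ⌊2 ^ n * X ω⌋₊ :=
  funext fun ω => Dn_eq_natFloor_div (hX ω)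

lemma logb_max_one_le_logPlus (x : ℝ) : logb 2 (max x 1) ≤ logPlus x := by
  rcases le_total x 1 with hx | hx
  · simp [logPlus, hx]
  · simp [logPlus, hx]

theorem entropy_distance_squared_general {s : ℝ} (hs : 1 / 2 < s) (hs₁ : s < 1) :
    ∃ ε₀ > 0, ∃ B > 0, ∀ {Ω : Type*} [MeasurableSpace Ω] {P : Measure Ω} [IsProbabilityMeasure P]
      {C : ℝ} {W W' : Ω → Plane}, Frostman P W (2 * s) C → IndepFun W W' P →
      IdentDistrib W W' P P → ∀ n : ℕ, HasFiniteEntropy P (fun ω => Dn n (dist (W ω) (W' ω) ^ 2)) →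
        n * (s + ε₀) - 2 * logPlus C - B ≤ Hn P n fun ω => dist (W ω) (W' ω) ^ 2 := by
  obtain ⟨ε₀, hε₀, B, hB, hentropy⟩ := exists_le_entOf_floor hs hs₁
  refine ⟨ε₀, hε₀, B, hB, fun {Ω} _ P _ C W W' hF hind hident n hfin => ?_⟩
  have hZ : AEMeasurable (fun ω => W ω - W' ω) P :=
    hident.aemeasurable_fst.sub hident.aemeasurable_snd
  have := Measure.isProbabilityMeasure_map hZ
  have hinj : (fun k : ℕ => (k : ℝ) / 2 ^ n).Injective :=
    fun j k hjk => Nat.cast_injective ((div_left_inj' (by positivity)).1 hjk)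
  have hDn : (fun ω => Dn n (dist (W ω) (W' ω) ^ 2)) = (fun k : ℕ => (k : ℝ) / 2 ^ n) ∘
      (fun z : Plane => ⌊2 ^ n * ‖z‖ ^ 2⌋₊) ∘ fun ω => W ω - W' ω := by
    simp_rw [dist_eq_norm]
    exact Dn_comp_eq fun ω => sq_nonneg _
  have hfloor : Measurable fun z : Plane => ⌊(2 : ℝ) ^ n * ‖z‖ ^ 2⌋₊ := by fun_prop
  rw [hDn, hasFiniteEntropy_comp_iff hinj, ← hasFiniteEntropy_map_iff hZ hfloor] at hfin
  rw [Hn, hDn, entOf_comp hinj, ← entOf_map hZ hfloor]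
  refine le_trans ?_ (hentropy (le_max_right C 1) (re_charFun_map_sub_nonneg hind hident)
    (fun r hr => ((hF.mono (le_max_left C 1)).sub_of_indepFun hident.aemeasurable_fst
      hident.aemeasurable_snd hind).map_measureReal_norm_sq_lt_le hZ hr) n hfin)
  grw [logb_max_one_le_logPlus]

/-- Theorem (entropy of the squared distance, large dimension): there is an absolute `A > 0`
such that for each `1/2 < s < 1` there are `ε₀ = ε₀(s) > 0` and `B = B(s) > 0` with:
whenever `C, R > 0`, `W` is a `(2s,C)`-Frostman random variable with values in
`B(0,R) ⊂ ℝ²`, and `W'` is an independent copy of `W`, then for all `n`,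
`Hₙ(|W − W'|²) ≥ n(s + ε₀) − A log₊C − A log₊R − B`. -/
theorem entropy_distance_squared :
    ∃ A : ℝ, 0 < A ∧
      ∀ s : ℝ, 1 / 2 < s → s < 1 →
        ∃ ε₀ B : ℝ, 0 < ε₀ ∧ 0 < B ∧
          ∀ (C R : ℝ), 0 < C → 0 < R →
            ∀ (Ω : Type) (mΩ : MeasurableSpace Ω) (P : Measure Ω),
              IsProbabilityMeasure P →
              ∀ (W W' : Ω → EuclideanSpace ℝ (Fin 2)), Measurable W → Measurable W' →
                Frostman P W (2 * s) C →
                (∀ ω, W ω ∈ Metric.ball (0 : EuclideanSpace ℝ (Fin 2)) R) →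
                IndepFun W W' P →
                Measure.map W P = Measure.map W' P →
                ∀ n : ℕ,
                  (n : ℝ) * (s + ε₀) - A * logPlus C - A * logPlus R - B ≤
                    Hn P n (fun ω => dist (W ω) (W' ω) ^ 2) := by
  refine ⟨2, two_pos, fun s hs hs₁ => ?_⟩
  obtain ⟨ε₀, hε₀, B, hB, hentropy⟩ := entropy_distance_squared_general hs hs₁
  refine ⟨ε₀, B, hε₀, hB, fun C R _ _ Ω _ P _ W W' hW hW' hF hball hind hmap n => ?_⟩
  have hident : IdentDistrib W W' P P := ⟨hW.aemeasurable, hW'.aemeasurable, hmap⟩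
  have hfin := hasFiniteEntropy_Dn_of_ae_mem_Icc (n := n) <|
    ae_dist_sq_mem_Icc hident (ae_of_all _ hball)
  have hlogR : 0 ≤ logPlus R := le_max_right _ _
  linarith [hentropy hF hind hident n hfin]
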